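/- Admissible rules for algebraic precision: the following rules are derivable from the generating, congruence, and axiomatic rules of ⊑^C. (PrecAdAdjR) If Γ ⊢ T₁ ⊑^{C*} T₂ and Γ ⊢ t₁ ⊑^C ⟨T₂ ⇒ T₁⟩t₂, then Γ ⊢ ⟨T₁ ⇒ T₂⟩t₁ ⊑^C t₂. (PrecAdAdjL) If Γ ⊢ T₁ ⊑^{C*} T₂ and Γ ⊢ ⟨T₁ ⇒ T₂⟩t₁ ⊑^C t₂, then Γ ⊢ t₁ ⊑^C ⟨T₂ ⇒ T₁⟩t₂. (PrecAdComposeDown) If Γ ⊢ T₁ ⊑^{C*} T₂ ⊑^{C*} T₃, then ⟨T₂ ⇒ T₁⟩⟨T₃ ⇒ T₂⟩t and ⟨T₃ ⇒ T₁⟩t are equi-precise. (PrecAdIsoCast) If T₁ and T₂ are equi-precise (⊑^{C*} in both directions), then t and ⟨T₂ ⇒ T₁⟩⟨T₁ ⇒ T₂⟩t are equi-precise. (PrecAdTrivialCast) t and ⟨T ⇒ T⟩t are equi-precise. (PrecAdSimpleApp) If t₁ and t₁' both synthesize types η-normalizing to the non-dependent function type V₁→V₂, Γ ⊢ t₁ ⊑^C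 t₁', and Γ ⊢ t₂ ⊑^C t₂', then Γ ⊢ t₁ t₂ ⊑^C t₁' t₂'. -/

import Mathlib

set_option autoImplicit true
set_option maxHeartbeats 1000000

namespace CastIf

/-- Head tags of types: Π, 𝔹, Type. -/
inductive Tag : Type
  | pi | bool | type
deriving DecidableEq

/-- CastIf terms (de Bruijn indices).  `unk T` is `?_T`, `err T` is `℧_T`,
    `tag h t` is `⟨h⟩t`, `cast T₁ T₂ t` is `⟨T₁ ⇒ T₂⟩t`. -/
inductive Tm : Type
  | unk   : Tm → Tm                 -- ?_T
  | err   : Tm → Tm                 -- ℧_T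
  | tag   : Tag → Tm → Tm           -- ⟨h⟩t
  | cast  : Tm → Tm → Tm → Tm       -- ⟨T₁ ⇒ T₂⟩t
  | lam   : Tm → Tm → Tm            -- λx:T.t
  | ite   : Tm → Tm → Tm → Tm → Tm  -- if_T t₁ t₂ t₃
  | pi    : Tm → Tm → Tm            -- (x:T₁)→T₂
  | app   : Tm → Tm → Tm            -- t₁ t₂
  | bool  : Tm                      -- 𝔹
  | tt    : Tm                      -- true
  | ff    : Tm                      -- false
  | type  : Nat → Tm                -- Type_ℓ
  | var   : Nat → Tm                -- x
deriving DecidableEq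

/-- shift free de Bruijn variables `≥ c` up by `d` -/
def lift (d : Nat) : Nat → Tm → Tm
  | c, .unk T => .unk (lift d c T)
  | c, .err T => .err (lift d c T)
  | c, .tag h t => .tag h (lift d c t)
  | c, .cast T1 T2 t => .cast (lift d c T1) (lift d c T2) (lift d c t)
  | c, .lam T t => .lam (lift d c T) (lift d (c+1) t)
  | c, .ite T a b e => .ite (lift d c T) (lift d c a) (lift d c b) (lift d c e)
  | c, .pi T1 T2 => .pi (lift d c T1) (lift d (c+1) T2)
  | c, .app a b => .app (lift d c a) (lift d c b)
  | _, .bool => .bool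
  | _, .tt => .tt
  | _, .ff => .ff
  | _, .type l => .type l
  | c, .var n => if n < c then .var n else .var (n + d)

/-- capture-avoiding substitution of `s` for variable `k` -/
def subst (k : Nat) (s : Tm) : Tm → Tm
  | .unk T => .unk (subst k s T)
  | .err T => .err (subst k s T)
  | .tag h t => .tag h (subst k s t)
  | .cast T1 T2 t => .cast (subst k s T1) (subst k s T2) (subst k s t)
  | .lam T t => .lam (subst k s T) (subst (k+1) s t)
  | .ite T a b e => .ite (subst k s T) (subst k s a) (subst k s b) (subst k s e)
  | .pi T1 T2 => .pi (subst k s T1) (subst (k+1) s T2)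
  | .app a b => .app (subst k s a) (subst k s b)
  | .bool => .bool
  | .tt => .tt
  | .ff => .ff
  | .type l => .type l
  | .var n => if n < k then .var n else if n = k then lift k 0 s else .var (n-1)

/-- substitute for the innermost bound variable: `[s/x]t` -/
def subst0 (s t : Tm) : Tm := subst 0 s t

/-- replace the bound variable of `t` (a term under one binder) by `a`,
    where `a` may itself mention the new innermost variable;
    used e.g. for `[⟨T₁' ⇒ T₁⟩x / x]T₂`. -/
def substKeep (a t : Tm) : Tm := subst 0 a (lift 1 1 t)

/-- tag of a type (partial) -/
def tyTagOf : Tm → Option Tag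
  | .pi _ _ => some .pi
  | .bool => some .bool
  | .type _ => some .type
  | _ => none

/-- tag of the type a (well-typed) term must have (partial) -/
def typeTagOf : Tm → Option Tag
  | .tt => some .bool
  | .ff => some .bool
  | .lam _ _ => some .pi
  | .pi _ _ => some .type
  | .bool => some .type
  | .type _ => some .type
  | _ => none

/-- level-1 (least precise) type of a tag at level `l` -/
def L1 (l : Nat) : Tag → Tm
  | .pi => .pi (.unk (.type l)) (.unk (.type l))
  | .bool => .bool
  | .type => .type l

/-- Top-level reductions of CastIf -/
inductive Red : Tm → Tm → Prop
  | beta : Red (.app (.lam T t2) t1) (subst0 t1 t2)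
  | iteTrue : Red (.ite T .tt a b) a
  | iteFalse : Red (.ite T .ff a b) b
  | betaUnk : Red (.app (.unk (.pi T1 T2)) t) (.unk (subst0 t T2))
  | betaErr : Red (.app (.err (.pi T1 T2)) t) (.err (subst0 t T2))
  | iteUnk : Red (.ite T (.unk .bool) a b) (.unk T)
  | iteErr : Red (.ite T (.err .bool) a b) (.err T)
  | unkUnk : Red (.cast (.unk (.type l)) (.unk (.type l)) t) t
  | typeType : typeTagOf t = some .type → Red (.cast (.type l) (.type l) t) t
  | boolBool : typeTagOf t = some .bool → Red (.cast .bool .bool t) t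
  | tagMismatch : tyTagOf T1 = some h1 → tyTagOf T2 = some h2 → h1 ≠ h2 →
      Red (.cast T1 T2 t) (.err T2)
  | fromUnk : tyTagOf T = some h →
      Red (.cast (.unk (.type l)) T (.tag h t)) (.cast (L1 l h) T t)
  | fromUnkErr : tyTagOf T = some h' → h ≠ h' →
      Red (.cast (.unk (.type l)) T (.tag h t)) (.err T)
  | toUnk : tyTagOf T = some h → h ≠ Tag.pi →
      Red (.cast T (.unk (.type l)) t) (.tag h (.cast T (L1 l h) t))
  | fromErr : Red (.cast (.err (.type l)) T t) (.err T)
  | castErr : Red (.cast T1 T2 (.err T1)) (.err T2)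
  | toErr : Red (.cast T (.err (.type l)) t) (.err (.err (.type l)))
  | piUnk :
      Red (.cast (.pi T1 T2) (.unk (.type l)) t)
        (.tag .pi (.lam (.unk (.type l))
          (.cast (lift 1 0 (subst0 (.unk T1) T2)) (.unk (.type l))
            (.app (lift 1 0 t) (.unk (lift 1 0 T1))))))
  | piPi :
      Red (.cast (.pi T1 T2) (.pi T1' T2') t)
        (.lam T1'
          (.cast (substKeep (.cast (lift 1 0 T1') (lift 1 0 T1) (.var 0)) T2) T2'
            (.app (lift 1 0 t) (.cast (lift 1 0 T1') (lift 1 0 T1) (.var 0)))))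

/-- One-step reduction: compatible (contextual) closure of `Red` -/
inductive Step : Tm → Tm → Prop
  | red : Red t t' → Step t t'
  | unk : Step T T' → Step (.unk T) (.unk T')
  | err : Step T T' → Step (.err T) (.err T')
  | tag : Step t t' → Step (.tag h t) (.tag h t')
  | castSrc : Step T1 T1' → Step (.cast T1 T2 t) (.cast T1' T2 t)
  | castTgt : Step T2 T2' → Step (.cast T1 T2 t) (.cast T1 T2' t)
  | castTm : Step t t' → Step (.cast T1 T2 t) (.cast T1 T2 t')
  | lamTy : Step T T' → Step (.lam T t) (.lam T' t)
  | lamBody : Step t t' → Step (.lam T t) (.lam T t')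
  | iteTy : Step T T' → Step (.ite T a b e) (.ite T' a b e)
  | iteScrut : Step a a' → Step (.ite T a b e) (.ite T a' b e)
  | iteThen : Step b b' → Step (.ite T a b e) (.ite T a b' e)
  | iteElse : Step e e' → Step (.ite T a b e) (.ite T a b e')
  | piDom : Step T1 T1' → Step (.pi T1 T2) (.pi T1' T2)
  | piCod : Step T2 T2' → Step (.pi T1 T2) (.pi T1 T2')
  | appFun : Step a a' → Step (.app a b) (.app a' b)
  | appArg : Step b b' → Step (.app a b) (.app a b')

/-- Multi-step reduction `→*` -/
def StepStar : Tm → Tm → Prop := Relation.ReflTransGen Step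

def notErr : Tm → Prop
  | .err _ => False
  | _ => True

def notUnk : Tm → Prop
  | .unk _ => False
  | _ => True

def notPi : Tm → Prop
  | .pi _ _ => False
  | _ => True

mutual
  /-- Neutral terms: normal terms blocked on a variable -/
  inductive Neu : Tm → Prop
    | var : Neu (.var n)
    | app : Neu N → Val v → Neu (.app N v)
    | ite : Val V → Neu N → Val v2 → Val v3 → Neu (.ite V N v2 v3)
    | castSrcNe : Neu N → Val V → Val v → notErr v → Neu (.cast N V v)
    | castTgtNe : Val V → Neu N → Val v → notErr v → Neu (.cast V N v)
    | castBoth : Val V1 → notErr V1 → notUnk V1 → notPi V1 →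
        Val V2 → notErr V2 → notUnk V2 → notPi V2 → Neu N → Neu (.cast V1 V2 N)
    | castFromUnk : Val V → notErr V → notUnk V → Neu N →
        Neu (.cast (.unk (.type l)) V N)
  /-- Values (normal forms) -/
  inductive Val : Tm → Prop
    | neu : Neu N → Val N
    | unk : Val V → Val (.unk V)
    | err : Val V → Val (.err V)
    | tag : Val v → Val (.tag h v)
    | type : Val (.type l)
    | lam : Val v → Val (.lam T v)
    | pi : Val V1 → Val V2 → Val (.pi V1 V2)
    | bool : Val .bool
    | tt : Val .tt
    | ff : Val .ff
end

/-- de Bruijn context lookup (types appropriately shifted) -/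
def lookup : List Tm → Nat → Option Tm
  | [], _ => none
  | T :: _, 0 => some (lift 1 0 T)
  | _ :: G, n+1 => (lookup G n).map (lift 1 0)

/-- Type-directed η-expansion of normal forms: `Γ ⊢ v ⟶η v' : V`.
    Neutral terms, `?`, and `℧` of Π-type are expanded into λ-abstractions;
    the remaining rules are structural. -/
inductive Eta : List Tm → Tm → Tm → Tm → Prop
  | neuPi : Neu N → Eta (V1 :: G) (.app (lift 1 0 N) (.var 0)) v V2 →
      Eta G N (.lam V1 v) (.pi V1 V2)
  | unkPi : Eta (V1 :: G) V2 V2' (.type l) →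
      Eta G (.unk (.pi V1 V2)) (.lam V1 (.unk V2')) (.pi V1 V2)
  | errPi : Eta (V1 :: G) V2 V2' (.type l) →
      Eta G (.err (.pi V1 V2)) (.lam V1 (.err V2')) (.pi V1 V2)
  | neuBase : Neu N → notPi V → Eta G N N V
  | unkBase : notPi V → Eta G (.unk V) (.unk V) V
  | errBase : notPi V → Eta G (.err V) (.err V) V
  | lam : Eta (V1 :: G) v v' V2 → Eta G (.lam V1 v) (.lam V1 v') (.pi V1 V2)
  | pi : Eta G V1 V1' (.type l) → Eta (V1 :: G) V2 V2' (.type l) →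
      Eta G (.pi V1 V2) (.pi V1' V2') (.type l)
  | bool : Eta G .bool .bool (.type l)
  | type : Eta G (.type l) (.type l) (.type (l+1))
  | tt : Eta G .tt .tt .bool
  | ff : Eta G .ff .ff .bool
  | tag : Val v → Eta G (.tag h v) (.tag h v) (.unk (.type l))

/-- Normalization with η-expansion: `Γ ⊢ t ⟶*η v : T` -/
def NormEta (G : List Tm) (t v T : Tm) : Prop :=
  ∃ v', StepStar t v' ∧ Eta G v' v T

mutual
  /-- Bidirectional type synthesis `Γ ⊢ t ⇒ T` for CastIf -/
  inductive Synth : List Tm → Tm → Tm → Prop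
    | var : lookup G n = some T → Synth G (.var n) T
    | type : Synth G (.type l) (.type (l+1))
    | bool : Synth G .bool (.type 0)
    | tt : Synth G .tt .bool
    | ff : Synth G .ff .bool
    | pi : Synth G T1 (.type l1) → Synth (T1 :: G) T2 (.type l2) →
        Synth G (.pi T1 T2) (.type (max l1 l2))
    | app : Synth G t0 T → Synth G T (.type l) → NormEta G T (.pi V1 V2) (.type l) →
        Check G t1 V1 → Synth G (.app t0 t1) (subst0 t1 V2)
    | lam : Synth (T1 :: G) t T2 → Synth G (.lam T1 t) (.pi T1 T2)
    | ite : Check G t1 .bool → Synth G T (.type l) → Check G t2 T → Check G t3 T →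
        Synth G (.ite T t1 t2 t3) T
    | cast : Synth G T1 (.type l) → Check G t T1 → Check G T2 (.type l) →
        Synth G (.cast T1 T2 t) T2
    | tag : h ≠ Tag.pi → Check G t (L1 l h) → Synth G (.tag h t) (.unk (.type l))
    | tagFun : Check G v (.unk (.type l)) →
        Synth G (.tag .pi (.lam (.unk (.type l)) (lift 1 0 v))) (.unk (.type l))
    | unk : Synth G T (.type l) → Synth G (.unk T) T
    | err : Synth G T (.type l) → Synth G (.err T) T
  /-- Bidirectional type checking `Γ ⊢ t ⇐ T`: the sole rule is conversion,
      requiring the synthesized and checked types to share an η-normal form. -/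
  inductive Check : List Tm → Tm → Tm → Prop
    | conv : Synth G t T' → Synth G T' (.type l) → Check G T (.type l) →
        NormEta G T V (.type l) → NormEta G T' V (.type l) → Check G t T
end

/-- `Γ ⊢ t : T` means `t` synthesizes `T` or checks against `T` -/
def HasType (G : List Tm) (t T : Tm) : Prop := Synth G t T ∨ Check G t T

/-- `Γ ⊢ t ▸ V`: `t` synthesizes a type that η-normalizes to `V` -/
def PSynth (G : List Tm) (t V : Tm) : Prop :=
  ∃ T l, Synth G t T ∧ NormEta G T V (.type l)

/-- `Γ ⊢ T ⟶*η V` for a type `T` (at some universe level) -/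
def NormEtaTy (G : List Tm) (T V : Tm) : Prop := ∃ l, NormEta G T V (.type l)

mutual
  /-- Algebraic precision `Γ ⊢ t₁ ⊑^C t₂`: generating and structural rules
      plus the axioms describing the behaviour of casts. -/
  inductive Prec : List Tm → Tm → Tm → Prop
    | genUnk : PSynth G t V → NormEtaTy G T V → Prec G t (.unk T)
    | genErr : NormEtaTy G T V → PSynth G t V → Prec G (.err T) t
    | congApp : PSynth G t1 (.pi V1 V2) → PSynth G t1' (.pi V1 V2) →
        StepStar (subst0 t2 V2) T → StepStar (subst0 t2' V2) T' →
        Prec G t1 t1' → Prec G t2 t2' →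
        Prec G (.cast T T' (.app t1 t2)) (.app t1' t2')
    | congPi : Prec G T1 T1' →
        Prec (T1' :: G) (substKeep (.cast (lift 1 0 T1') (lift 1 0 T1) (.var 0)) T2) T2' →
        Prec G (.pi T1 T2) (.pi T1' T2')
    | congCast : Prec G t t' → Prec G (.cast T1 T2 t) (.cast T1 T2 t')
    | congLam : Prec (T :: G) t1 t2 → Prec G (.lam T t1) (.lam T t2)
    | congTag : Prec G t1 t2 → Prec G (.tag h t1) (.tag h t2)
    | congIte : Prec G t1 t1' → Prec G t2 t2' → Prec G t3 t3' →
        Prec G (.ite T t1 t2 t3) (.ite T t1' t2' t3')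
    | refl : Prec G t t
    | trans : Prec G t1 t2 → Prec G t2 t3 → Prec G t1 t3
    | eta :
        Prec G (.cast (.pi T1 T2) (.pi T1' T2') t)
          (.lam T1'
            (.cast (substKeep (.cast (lift 1 0 T1') (lift 1 0 T1) (.var 0)) T2) T2'
              (.app (lift 1 0 t) (.cast (lift 1 0 T1') (lift 1 0 T1) (.var 0)))))
    | castBot : Prec G (.cast T1 T2 (.err T1)) (.err T2)
    | upDown : PrecStar G T1 T2 → Prec G t (.cast T2 T1 (.cast T1 T2 t))
    | downUp : PrecStar G T1 T2 → Prec G (.cast T1 T2 (.cast T2 T1 t)) t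
    | intermed : PrecStar G T1 T2 →
        Prec G (.cast T1 T' (.cast T T1 t)) (.cast T2 T' (.cast T T2 t))
    | composeUp : PrecStar G T1 T2 → PrecStar G T2 T3 →
        Prec G (.cast T2 T3 (.cast T1 T2 t)) (.cast T1 T3 t)
    | composeUpInv : PrecStar G T1 T2 → PrecStar G T2 T3 →
        Prec G (.cast T1 T3 t) (.cast T2 T3 (.cast T1 T2 t))
  /-- Precision modulo normalization `Γ ⊢ T₁ ⊑^{C*} T₂` -/
  inductive PrecStar : List Tm → Tm → Tm → Prop
    | norm : StepStar T1 V1 → StepStar T2 V2 → Prec G V1 V2 → PrecStar G T1 T2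
end

/-!
Casting up along `T1 ⊑ T2` is left adjoint to casting down: `upDown` and `downUp` are the unit and
the counit, `congCast` is functoriality. Two consecutive self-casts `⟨T ⇒ T⟩` are equi-precise both
with the identity and, by `composeUp`, with one self-cast. Hence self-casts are trivial, and they
can be cancelled wherever `intermed` or `congApp` produces one.
-/

section

variable {G : List Tm} {T1 T2 T3 W V1 V2 t t1 t1' t2 t2' : Tm}

theorem subst_lift_self (k : Nat) (s t : Tm) : subst k s (lift 1 k t) = t := by
  induction t generalizing k with
  | var n => grind [lift, subst]
  | _ => simp_all only [lift, subst]

theorem subst0_lift_self (s t : Tm) : subst0 s (lift 1 0 t) = t :=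
  subst_lift_self 0 s t

theorem PrecStar.refl (G : List Tm) (T : Tm) : PrecStar G T T :=
  .norm .refl .refl .refl

instance (G : List Tm) : IsTrans Tm (Prec G) :=
  ⟨fun _ _ _ => .trans⟩

theorem PrecStar.cast_prec_iff_prec_cast (h : PrecStar G T1 T2) :
    Prec G (.cast T1 T2 t1) t2 ↔ Prec G t1 (.cast T2 T1 t2) where
  mp p := .trans (.upDown h) (.congCast p)
  mpr p := .trans (.congCast p) (.downUp h)

theorem antisymmRel_cast_cast_swap (h : AntisymmRel (PrecStar G) T1 T2) (t : Tm) :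
    AntisymmRel (Prec G) t (.cast T2 T1 (.cast T1 T2 t)) :=
  ⟨.upDown h.1, .downUp h.2⟩

theorem antisymmRel_cast_cast_up (h12 : PrecStar G T1 T2) (h23 : PrecStar G T2 T3) (t : Tm) :
    AntisymmRel (Prec G) (.cast T2 T3 (.cast T1 T2 t)) (.cast T1 T3 t) :=
  ⟨.composeUp h12 h23, .composeUpInv h12 h23⟩

theorem antisymmRel_cast_self (G : List Tm) (T t : Tm) :
    AntisymmRel (Prec G) t (.cast T T t) :=
  have h := PrecStar.refl G T
  (antisymmRel_cast_cast_swap ⟨h, h⟩ t).trans (antisymmRel_cast_cast_up h h t)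

theorem PrecStar.cast_cast_prec_cast (h : PrecStar G T2 T3) :
    Prec G (.cast T2 T1 (.cast T3 T2 t)) (.cast T3 T1 t) :=
  calc
    Prec G (.cast T2 T1 (.cast T3 T2 t)) (.cast T3 T1 (.cast T3 T3 t)) := .intermed h
    Prec G _ (.cast T3 T1 t) := .congCast (antisymmRel_cast_self G T3 t).2

theorem PrecStar.cast_prec_cast_cast (h : PrecStar G T1 T2) :
    Prec G (.cast T3 T1 t) (.cast T2 T1 (.cast T3 T2 t)) :=
  h.cast_prec_iff_prec_cast.mp <|
    calc
      Prec G (.cast T1 T2 (.cast T3 T1 t)) (.cast T2 T2 (.cast T3 T2 t)) := .intermed h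
      Prec G _ (.cast T3 T2 t) := (antisymmRel_cast_self G T2 _).2

theorem Prec.app_of_common_codomain (h : PSynth G t1 (.pi V1 V2)) (h' : PSynth G t1' (.pi V1 V2))
    (hW : StepStar (subst0 t2 V2) W) (hW' : StepStar (subst0 t2' V2) W)
    (p1 : Prec G t1 t1') (p2 : Prec G t2 t2') :
    Prec G (.app t1 t2) (.app t1' t2') :=
  calc
    Prec G (.app t1 t2) (.cast W W (.app t1 t2)) := (antisymmRel_cast_self G W _).1
    Prec G _ (.app t1' t2') := .congApp h h' hW hW' p1 p2

theorem Prec.app_of_nondependent (h : PSynth G t1 (.pi V1 (lift 1 0 V2)))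
    (h' : PSynth G t1' (.pi V1 (lift 1 0 V2))) (p1 : Prec G t1 t1') (p2 : Prec G t2 t2') :
    Prec G (.app t1 t2) (.app t1' t2') :=
  have codomain_const (s : Tm) : StepStar (subst0 s (lift 1 0 V2)) V2 := by
    rw [subst0_lift_self]
    exact .refl
  .app_of_common_codomain h h' (codomain_const t2) (codomain_const t2') p1 p2

end

/-- **Admissible rules for algebraic precision.** -/
theorem admissible_rules_for_precision :
    -- PrecAdAdjR
    (∀ (G : List Tm) (T1 T2 t1 t2 : Tm),
       PrecStar G T1 T2 → Prec G t1 (.cast T2 T1 t2) →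
         Prec G (.cast T1 T2 t1) t2) ∧
    -- PrecAdAdjL
    (∀ (G : List Tm) (T1 T2 t1 t2 : Tm),
       PrecStar G T1 T2 → Prec G (.cast T1 T2 t1) t2 →
         Prec G t1 (.cast T2 T1 t2)) ∧
    -- PrecAdComposeDown
    (∀ (G : List Tm) (T1 T2 T3 t : Tm),
       PrecStar G T1 T2 → PrecStar G T2 T3 →
         Prec G (.cast T2 T1 (.cast T3 T2 t)) (.cast T3 T1 t) ∧
         Prec G (.cast T3 T1 t) (.cast T2 T1 (.cast T3 T2 t))) ∧
    -- PrecAdIsoCast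
    (∀ (G : List Tm) (T1 T2 t : Tm),
       PrecStar G T1 T2 → PrecStar G T2 T1 →
         Prec G t (.cast T2 T1 (.cast T1 T2 t)) ∧
         Prec G (.cast T2 T1 (.cast T1 T2 t)) t) ∧
    -- PrecAdTrivialCast
    (∀ (G : List Tm) (T t : Tm),
       Prec G t (.cast T T t) ∧ Prec G (.cast T T t) t) ∧
    -- PrecAdSimpleApp (non-dependent function type V₁ → V₂)
    (∀ (G : List Tm) (t1 t1' t2 t2' V1 V2 : Tm),
       PSynth G t1 (.pi V1 (lift 1 0 V2)) → PSynth G t1' (.pi V1 (lift 1 0 V2)) →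
       Prec G t1 t1' → Prec G t2 t2' →
         Prec G (.app t1 t2) (.app t1' t2')) := by
  refine ⟨?adjR, ?adjL, ?composeDown, ?isoCast, ?trivialCast, ?simpleApp⟩
  case adjR => exact fun _ _ _ _ _ h => h.cast_prec_iff_prec_cast.mpr
  case adjL => exact fun _ _ _ _ _ h => h.cast_prec_iff_prec_cast.mp
  case composeDown =>
    exact fun _ _ _ _ _ h12 h23 => ⟨h23.cast_cast_prec_cast, h12.cast_prec_cast_cast⟩
  case isoCast => exact fun _ _ _ t h12 h21 => antisymmRel_cast_cast_swap ⟨h12, h21⟩ t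
  case trivialCast => exact antisymmRel_cast_self
  case simpleApp => exact fun _ _ _ _ _ _ _ => .app_of_nondependent


end CastIf
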